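/- (Analytic non-archimedean van der Corput Lemma.) Let f ∈ K⦃x⦄ and suppose that for some k ≥ 1 one has |f^{(k)}(x)| ≥ 1 for all x ∈ O_K. Let I(y) := ∫_{O_K} ψ(y·f(t)) |dt|. Then for all y ∈ K^× one has |I(y)| ≤ c_k · |y|^{-1/k}, where the constant c_k depends only on k, q_K, and the Gauss norm ‖f − f(0)‖. Alternatively, if K has characteristic zero, c_k can be taken to depend only on k, q_K, the ramification degree ord(p_K) of K, and the SP-number of f^{(k-1)}. -/

import Mathlib

open MeasureTheory Filter
open scoped NNReal ENNReal Classical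

namespace VdC

variable {K : Type*} [NontriviallyNormedField K]

/-! ### One-variable convergent power series over a non-archimedean local field -/

/-- Evaluation of a one-variable power series (given by its coefficients) at a point. -/
noncomputable def pseval (a : ℕ → K) (x : K) : K := ∑' i, a i * x ^ i

/-- Membership in `K⦃x⦄`: the coefficients tend to `0`, i.e. convergence on `O_K`. -/
def IsConvergent (a : ℕ → K) : Prop := Tendsto (fun i => ‖a i‖) atTop (nhds 0)

/-- Gauss norm of a power series. -/
noncomputable def gaussNorm (a : ℕ → K) : ℝ := ⨆ i, ‖a i‖

/-- Coefficients of `f - f(0)`. -/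
def tail (a : ℕ → K) : ℕ → K := fun i => if i = 0 then 0 else a i

/-- SP power series: `a 1 ≠ 0` and `a j ∈ a 1 • M_K` for all `j > 1`;
`‖a 1‖` is then the SP-norm `|f|_SP`. -/
def IsSP (a : ℕ → K) : Prop := a 1 ≠ 0 ∧ ∀ j, 1 < j → ‖a j‖ < ‖a 1‖

/-- Coefficients of `f_{b,c}(t) = (1/c) ⬝ f (b + c t)`. -/
noncomputable def shiftCoeff (a : ℕ → K) (b c : K) : ℕ → K :=
  fun j => c⁻¹ * c ^ j * ∑' m : ℕ, ((m + j).choose j : K) * a (m + j) * b ^ m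

/-- `SPAt q a r` says: for all nonzero `c ∈ M_K ^ r` and all `b ∈ O_K`, the power series
`f_{b,c}` is SP.  (Here `c ∈ M_K ^ r` iff `‖c‖ ≤ q⁻¹ ^ r`.)  The SP-number of `f` is the
least `r` with this property, i.e. `IsLeast {r | SPAt q a r} r`. -/
def SPAt (q : ℕ) (a : ℕ → K) (r : ℕ) : Prop :=
  ∀ b c : K, ‖b‖ ≤ 1 → c ≠ 0 → ‖c‖ ≤ (q : ℝ)⁻¹ ^ r → IsSP (shiftCoeff a b c)

/-- Coefficients of the derivative of a power series; `dcoeff^[k] a` gives `f^{(k)}`. -/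
def dcoeff (a : ℕ → K) : ℕ → K := fun j => ((j + 1 : ℕ) : K) * a (j + 1)

/-- `K` is a non-archimedean local field whose residue field has `q` elements, the norm
being normalized so that a uniformizer `π_K` has norm `q⁻¹`. -/
structure IsLocalField (K : Type*) [NontriviallyNormedField K] (q : ℕ) : Prop where
  nonarch : IsNonarchimedean (norm : K → ℝ)
  one_lt : 1 < q
  complete : CompleteSpace K
  exists_unif : ∃ π : K, ‖π‖ = (q : ℝ)⁻¹
  discrete : ∀ x : K, x ≠ 0 → ∃ m : ℤ, ‖x‖ = (q : ℝ) ^ m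
  residue : ∃ T : Finset K, T.card = q ∧ (∀ t ∈ T, ‖t‖ ≤ 1) ∧
      ∀ x : K, ‖x‖ ≤ 1 → ∃! t, t ∈ T ∧ ‖x - t‖ < 1

/-- `ψ` is an additive character on `K`, trivial on `M_K` and nontrivial on `O_K`. -/
structure IsAddChar (ψ : K → ℂ) : Prop where
  cont : Continuous ψ
  map_add : ∀ x y, ψ (x + y) = ψ x * ψ y
  norm_eq : ∀ x, ‖ψ x‖ = 1
  triv : ∀ x : K, ‖x‖ < 1 → ψ x = 1
  nontriv : ∃ x : K, ‖x‖ ≤ 1 ∧ ψ x ≠ 1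

/-- The characteristic of `K` is zero or larger than `k`. -/
def CharCond (K : Type*) [NontriviallyNormedField K] (k : ℕ) : Prop :=
  ∀ m : ℕ, m ≤ k → (m : K) = 0 → m = 0

/-- `p` is the residue characteristic of `K` (so `q = p ^ f` is the residue cardinality)
and `e = ord (p_K)` is the ramification degree of `K`, i.e. `‖p‖ = q ^ (-e)`. -/
def IsResidueData (K : Type*) [NontriviallyNormedField K] (q p e : ℕ) : Prop :=
  p.Prime ∧ (∃ f : ℕ, 0 < f ∧ q = p ^ f) ∧ 0 < e ∧ ‖(p : K)‖ = (q : ℝ)⁻¹ ^ e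

/-- `f` is (Weierstrass) regular of degree `d`: it lies in `O_K⦃x⦄` and is congruent to
a monic polynomial of degree `d` modulo `π_K ⬝ O_K⦃x⦄`. -/
def IsRegularOfDeg (a : ℕ → K) (d : ℕ) : Prop :=
  (∀ i, ‖a i‖ ≤ 1) ∧ ‖a d - 1‖ < 1 ∧ ∀ i, d < i → ‖a i‖ < 1

/-! ### Several variables -/

/-- Evaluation of a power series in `n` variables at a point. -/
noncomputable def mpseval {n : ℕ} (a : (Fin n → ℕ) → K) (x : Fin n → K) : K :=
  ∑' i : Fin n → ℕ, a i * ∏ j, x j ^ i j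

/-- Membership in `K⦃x_1,…,x_n⦄`: `‖a i‖ → 0` as `|i| → ∞`. -/
def MIsConvergent {n : ℕ} (a : (Fin n → ℕ) → K) : Prop :=
  Tendsto (fun i => ‖a i‖) cofinite (nhds 0)

/-- Gauss norm of a multivariate power series. -/
noncomputable def mgauss {n : ℕ} (a : (Fin n → ℕ) → K) : ℝ := ⨆ i, ‖a i‖

/-- Coefficients of `f - f(0)`. -/
def mtail {n : ℕ} (a : (Fin n → ℕ) → K) : (Fin n → ℕ) → K :=
  fun i => if i = 0 then 0 else a i

/-- Coefficients of the partial derivative `∂^α f` of a multivariate power series `f`. -/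
noncomputable def mpderiv {n : ℕ} (a : (Fin n → ℕ) → K) (α : Fin n → ℕ) :
    (Fin n → ℕ) → K :=
  fun i => ((∏ j, (i j + α j).descFactorial (α j) : ℕ) : K) * a (fun j => i j + α j)

/-- The unit polydisc `O_K ^ n`. -/
def polydisc (K : Type*) [NontriviallyNormedField K] (n : ℕ) : Set (Fin n → K) :=
  {x | ∀ i, ‖x i‖ ≤ 1}

/-! ### `K`-analytic manifolds with isometric charts, type conditions, induced measures -/

/-- An isometric analytic chart of the `d`-dimensional manifold `M ⊆ K^n` centered at
`x0 ∈ M`: `ι` selects the `d` coordinates of the coordinate projection `p : x ↦ x ∘ ι`,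
and the inverse of `p` is given by the `n` convergent power series `F i`, parametrizing
`M ∩ {x : ‖x - x0‖ ≤ ‖c‖}` isometrically by the polydisc `x0 + (c O_K)^d`. -/
def IsChartAt {n : ℕ} (d : ℕ) (M : Set (Fin n → K)) (x0 : Fin n → K)
    (ι : Fin d → Fin n) (c : K) (F : Fin n → (Fin d → ℕ) → K) : Prop :=
  Function.Injective ι ∧ c ≠ 0 ∧ (∀ i, MIsConvergent (F i)) ∧
  (∀ i, mpseval (F i) 0 = x0 i) ∧
  (∀ z : Fin d → K, z ∈ polydisc K d → ∀ j, mpseval (F (ι j)) z = x0 (ι j) + c * z j) ∧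
  (∀ z z' : Fin d → K, z ∈ polydisc K d → z' ∈ polydisc K d →
      ∀ i, ‖mpseval (F i) z - mpseval (F i) z'‖ ≤ ‖c‖ * (⨆ j, ‖z j - z' j‖)) ∧
  ((fun z : Fin d → K => fun i => mpseval (F i) z) '' polydisc K d
      = M ∩ {x | ∀ i, ‖x i - x0 i‖ ≤ ‖c‖})

/-- `M ⊆ K^n` is a `d`-dimensional `K`-analytic manifold (with isometric charts). -/
def IsManifold {n : ℕ} (d : ℕ) (M : Set (Fin n → K)) : Prop :=
  ∀ x0 ∈ M, ∃ ι c F, IsChartAt d M x0 ι c F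

/-- `M` is of type at most `k` at the point `x0`: for some analytic chart `f = (F i)_i`
centered at `x0` and each nonzero `v ∈ K^n` there is a multi-index `α` with
`0 < |α| ≤ k` and `v ⬝ (∂^α f)(x0) ≠ 0`. -/
def TypeAtMost {n : ℕ} (d : ℕ) (M : Set (Fin n → K)) (x0 : Fin n → K) (k : ℕ) : Prop :=
  ∃ ι c F, IsChartAt d M x0 ι c F ∧
    ∀ v : Fin n → K, v ≠ 0 → ∃ α : Fin d → ℕ, 0 < (∑ j, α j) ∧ (∑ j, α j) ≤ k ∧
      (∑ i, v i * mpseval (mpderiv (F i) α) 0) ≠ 0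

/-- `M` is of type `k`: of type at most `k` at each of its points, `k` least such. -/
def IsOfType {n : ℕ} (d : ℕ) (M : Set (Fin n → K)) (k : ℕ) : Prop :=
  0 < k ∧ (∀ x ∈ M, TypeAtMost d M x k) ∧
    ∀ k', (∀ x ∈ M, TypeAtMost d M x k') → k ≤ k'

/-- `μS` is the measure on the manifold `S ⊆ K^n` induced, via the isometric charts
of `S` (namely the coordinate projections `x ↦ x ∘ ι`), from the Haar measure `lamd` on
`K^d` normalized so that `O_K^d` has measure `1`. -/
def IsInducedMeasure [MeasurableSpace K] {n : ℕ} (d : ℕ) (S : Set (Fin n → K))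
    (μS : Measure (Fin n → K)) (lamd : Measure (Fin d → K)) : Prop :=
  μS {x | x ∉ S} = 0 ∧
  ∀ x0 ∈ S, ∀ ι c F, IsChartAt d S x0 ι c F →
    ∀ A : Set (Fin n → K), MeasurableSet A → A ⊆ S ∩ {x | ∀ i, ‖x i - x0 i‖ ≤ ‖c‖} →
      μS A = lamd ((fun x : Fin n → K => x ∘ ι) '' A)

/-! ### Maximal function and Riesz kernel on `K^n` -/

/-- The Hardy–Littlewood maximal function on `K^n`, where the balls are the sets
`a + b ⬝ O_K^n` with `b ≠ 0`. -/
noncomputable def maximalFn [MeasurableSpace K] {n : ℕ} (μ : Measure (Fin n → K))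
    (f : (Fin n → K) → ℂ) (x : Fin n → K) : ℝ :=
  sSup {r : ℝ | ∃ (a : Fin n → K) (b : K), b ≠ 0 ∧ (∀ i, ‖x i - a i‖ ≤ ‖b‖) ∧
    r = (μ {y | ∀ i, ‖y i - a i‖ ≤ ‖b‖}).toReal⁻¹ *
      ∫ y in {y : Fin n → K | ∀ i, ‖y i - a i‖ ≤ ‖b‖}, ‖f y‖ ∂μ}

/-- The kernel `y ↦ |y|^{-γ}` on `K^n`, extended by `0` at `0`. -/
noncomputable def rieszKernel {n : ℕ} (γ : ℝ) (y : Fin n → K) : ℂ :=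
  if y = 0 then 0 else ((‖y‖ ^ (-γ) : ℝ) : ℂ)

end VdC

/-!
Replacing `f` by a polynomial, cover `O_K` by discs on each of which the Taylor terms of `f` of
degree greater than `k` are dominated by the one of degree `k`; both hypotheses, on the Gauss norm
and on the SP-number, provide the radius `q⁻¹ ^ R` of such discs. On each of them `y f'` has
Weierstrass degree less than `k`, so only boundedly many of its subdiscs of a given radius `s`
contain zeros of `f'` (over an algebraic closure). On the other subdiscs `y f` is dominated by its
linear term, and once `|y| s ^ k` is large enough the orthogonality of `ψ` makes the integral over
them vanish. What remains has measure of order `s`, and the optimal `s` is of order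
`|y| ^ (-1 / k)`.
-/

namespace VdC

open Polynomial
open scoped BigOperators

section Ultrametric

variable {K : Type*} [NormedField K] [IsUltrametricDist K]

lemma norm_natCast_mul_le (n : ℕ) (x : K) : ‖(n : K) * x‖ ≤ ‖x‖ := by
  rw [norm_mul]
  exact mul_le_of_le_one_left (norm_nonneg x) (IsUltrametricDist.norm_natCast_le_one K n)

lemma norm_sub_le_max (x y : K) : ‖x - y‖ ≤ max ‖x‖ ‖y‖ := by
  simpa [dist_eq_norm] using dist_triangle_max x 0 y

lemma norm_add_mul_le_one {b c x : K} (hb : ‖b‖ ≤ 1) (hc : ‖c‖ ≤ 1) (hx : ‖x‖ ≤ 1) :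
    ‖b + c * x‖ ≤ 1 := by
  refine (IsUltrametricDist.norm_add_le_max _ _).trans (max_le hb ?_)
  rw [norm_mul]
  exact mul_le_one₀ hc (norm_nonneg x) hx

lemma norm_eq_norm_of_norm_sub_lt {x y : K} (h : ‖x - y‖ < ‖y‖) : ‖x‖ = ‖y‖ := by
  have := IsUltrametricDist.norm_eq_of_add_norm_lt_max (x := x) (y := -y)
    (by simpa only [← sub_eq_add_neg, norm_neg] using h.trans_le (le_max_right _ _))
  rwa [norm_neg] at this

lemma exists_norm_eval_le_norm_coeff (G : K[X]) {b : K} (hb : ‖b‖ ≤ 1) :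
    ∃ j, ‖G.eval b‖ ≤ ‖G.coeff j‖ := by
  obtain ⟨j, -, hj⟩ := IsUltrametricDist.exists_norm_finsetSum_le
    (Finset.range (G.natDegree + 1)) fun j => G.coeff j * b ^ j
  refine ⟨j, (eval_eq_sum_range b).symm ▸ hj.trans ?_⟩
  rw [norm_mul, norm_pow]
  exact mul_le_of_le_one_right (norm_nonneg _) (pow_le_one₀ (norm_nonneg b) hb)

lemma exists_norm_taylor_coeff_le (G : K[X]) {b : K} (hb : ‖b‖ ≤ 1) (j : ℕ) :
    ∃ i, j ≤ i ∧ ‖(taylor b G).coeff j‖ ≤ ‖G.coeff i‖ := by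
  obtain ⟨i, hi⟩ := exists_norm_eval_le_norm_coeff (hasseDeriv j G) hb
  rw [← taylor_coeff, hasseDeriv_coeff] at hi
  exact ⟨i + j, Nat.le_add_left j i, hi.trans (norm_natCast_mul_le _ _)⟩

lemma norm_taylor_coeff_lt {G : K[X]} {b : K} (hb : ‖b‖ ≤ 1) {j : ℕ} {C : ℝ}
    (hG : ∀ i, j ≤ i → ‖G.coeff i‖ < C) : ‖(taylor b G).coeff j‖ < C :=
  let ⟨i, hji, hi⟩ := exists_norm_taylor_coeff_le G hb j
  hi.trans_lt (hG i hji)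

lemma norm_taylor_coeff_le {G : K[X]} {b : K} (hb : ‖b‖ ≤ 1) {j : ℕ} {C : ℝ}
    (hG : ∀ i, j ≤ i → ‖G.coeff i‖ ≤ C) : ‖(taylor b G).coeff j‖ ≤ C :=
  let ⟨i, hji, hi⟩ := exists_norm_taylor_coeff_le G hb j
  hi.trans (hG i hji)

lemma norm_taylor_coeff_eq {G : K[X]} {b : K} (hb : ‖b‖ ≤ 1) {j : ℕ}
    (hG : ∀ i, j < i → ‖G.coeff i‖ < ‖G.coeff j‖) : ‖(taylor b G).coeff j‖ = ‖G.coeff j‖ := by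
  have hpos : 0 < ‖G.coeff j‖ := (norm_nonneg _).trans_lt (hG (j + 1) j.lt_succ_self)
  have hmonomial : (taylor b (monomial j (G.coeff j))).coeff j = G.coeff j := by
    rw [taylor_coeff, hasseDeriv_monomial]; simp
  refine norm_eq_norm_of_norm_sub_lt ?_
  conv_lhs => rw [← hmonomial, ← coeff_sub, ← map_sub]
  refine norm_taylor_coeff_lt hb fun i hi => ?_
  rcases hi.eq_or_lt with rfl | hi
  · simpa using hpos
  · simpa [coeff_monomial, hi.ne] using hG i hi

lemma norm_eval_sub_eval_le {P : K[X]} {B : ℝ} (hP : ∀ j, ‖P.coeff j‖ ≤ B) {x y : K}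
    (hx : ‖x‖ ≤ 1) (hy : ‖y‖ ≤ 1) : ‖P.eval x - P.eval y‖ ≤ B * ‖x - y‖ := by
  have hxy : ‖x - y‖ ≤ 1 := (norm_sub_le_max x y).trans (max_le hx hy)
  have hfactor : P.eval x - P.eval y = (divX (taylor y P)).eval (x - y) * (x - y) := by
    have := congrArg (eval (x - y)) (divX_mul_X_add (taylor y P))
    simp only [eval_add, eval_mul, eval_X, eval_C, taylor_eval, taylor_coeff_zero,
      sub_add_cancel] at this
    exact sub_eq_of_eq_add this.symm
  obtain ⟨j, hj⟩ := exists_norm_eval_le_norm_coeff (divX (taylor y P)) hxy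
  rw [hfactor, norm_mul]
  gcongr
  rw [coeff_divX] at hj
  exact hj.trans (norm_taylor_coeff_le hy fun i _ => hP i)

end Ultrametric

/-- The polynomial `φ(b + c X)`: the restriction of `φ` to the disc of centre `b` and radius
`‖c‖`, in the coordinate of the unit disc. -/
noncomputable def discComp {R : Type*} [CommRing R] (φ : R[X]) (b c : R) : R[X] :=
  (taylor b φ).comp (C c * X)

section DiscComp

variable {R : Type*} [CommRing R] (φ : R[X]) (b c : R)

lemma discComp_coeff (j : ℕ) : (discComp φ b c).coeff j = (taylor b φ).coeff j * c ^ j :=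
  comp_C_mul_X_coeff

lemma discComp_eval (x : R) : (discComp φ b c).eval x = φ.eval (b + c * x) := by
  simp [discComp, taylor_eval, add_comm]

lemma discComp_discComp (b' c' : R) :
    discComp (discComp φ b c) b' c' = discComp φ (b + c * b') (c * c') := by
  simp only [discComp, taylor_apply, comp_assoc]
  congr 1
  simp only [add_comp, mul_comp, X_comp, C_comp, map_add, map_mul]
  ring

lemma derivative_discComp : derivative (discComp φ b c) = C c * discComp (derivative φ) b c := by
  rw [discComp, discComp, taylor_apply, taylor_apply]
  simp [derivative_comp]

lemma discComp_C_mul (u : R) : discComp (C u * φ) b c = C u * discComp φ b c := by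
  simp [discComp]

end DiscComp

lemma discComp_ne_zero {K : Type*} [Field K] {φ : K[X]} (hφ : φ ≠ 0) (b : K) {c : K} (hc : c ≠ 0) :
    discComp φ b c ≠ 0 := by
  intro h
  refine hφ (taylor_injective b (ext fun j => ?_))
  have := discComp_coeff φ b c j
  rw [h, coeff_zero, eq_comm, mul_eq_zero] at this
  simpa using this.resolve_right (pow_ne_zero j hc)

/-- `ϖ` is a uniformizer of the valuation ring `{‖x‖ ≤ 1}` and the finite set `T` is a system of
representatives of its residue field, so that `#T` is the residue cardinality. -/
structure IsDigitSystem {K : Type*} [NormedField K] (ϖ : K) (T : Finset K) : Prop where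
  ne_zero : ϖ ≠ 0
  norm_lt_one : ‖ϖ‖ < 1
  exists_zpow : ∀ x : K, x ≠ 0 → ∃ m : ℤ, ‖x‖ = ‖ϖ‖ ^ m
  norm_le_one : ∀ t ∈ T, ‖t‖ ≤ 1
  existsUnique : ∀ x : K, ‖x‖ ≤ 1 → ∃! t, t ∈ T ∧ ‖x - t‖ < 1

namespace IsDigitSystem

variable {K : Type*} [NormedField K] {ϖ : K} {T : Finset K}

lemma norm_pos (h : IsDigitSystem ϖ T) : 0 < ‖ϖ‖ := norm_pos_iff.2 h.ne_zero

lemma nonempty (h : IsDigitSystem ϖ T) : T.Nonempty :=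
  let ⟨t, ht, _⟩ := h.existsUnique 0 (by simp)
  ⟨t, ht.1⟩

lemma card_pos (h : IsDigitSystem ϖ T) : (0 : ℝ) < T.card := by
  exact_mod_cast h.nonempty.card_pos

lemma exists_eq_mul (h : IsDigitSystem ϖ T) {z : K} (hz : ‖z‖ < 1) :
    ∃ w : K, ‖w‖ ≤ 1 ∧ z = ϖ * w := by
  refine ⟨ϖ⁻¹ * z, ?_, (mul_inv_cancel_left₀ h.ne_zero z).symm⟩
  rcases eq_or_ne z 0 with rfl | hz0
  · simp
  obtain ⟨m, hm⟩ := h.exists_zpow z hz0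
  rw [hm, zpow_lt_one_iff_right_of_lt_one₀ h.norm_pos h.norm_lt_one] at hz
  rw [norm_mul, norm_inv, hm, mul_comm, ← zpow_sub_one₀ h.norm_pos.ne',
    zpow_le_one_iff_right_of_lt_one₀ h.norm_pos h.norm_lt_one]
  lia

lemma exists_norm_mul_pow_eq_one (h : IsDigitSystem ϖ T) {u : K} (hu : 1 ≤ ‖u‖) :
    ∃ m : ℕ, ‖u‖ * ‖ϖ‖ ^ m = 1 := by
  obtain ⟨m, hm⟩ := h.exists_zpow u (norm_pos_iff.1 (one_pos.trans_le hu))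
  rw [hm, one_le_zpow_iff_right_of_lt_one₀ h.norm_pos h.norm_lt_one] at hu
  refine ⟨(-m).toNat, ?_⟩
  rw [hm, ← zpow_natCast, Int.toNat_of_nonneg (by lia), ← zpow_add₀ h.norm_pos.ne',
    add_neg_cancel, zpow_zero]

lemma eq_of_norm_sub_lt_one (h : IsDigitSystem ϖ T) {s t : K} (hs : s ∈ T) (ht : t ∈ T)
    (hst : ‖s - t‖ < 1) : s = t :=
  (h.existsUnique s (h.norm_le_one s hs)).unique ⟨hs, by simp⟩ ⟨ht, hst⟩

variable [IsUltrametricDist K]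

lemma norm_digit_add_le_one (h : IsDigitSystem ϖ T) {t x : K} (ht : t ∈ T) (hx : ‖x‖ ≤ 1) :
    ‖t + ϖ * x‖ ≤ 1 :=
  norm_add_mul_le_one (h.norm_le_one t ht) h.norm_lt_one.le hx

lemma exists_bijOn_translate (h : IsDigitSystem ϖ T) {x : K} (hx : ‖x‖ ≤ 1) :
    ∃ σ : K → K, Set.BijOn σ T T ∧ ∀ t ∈ T, ‖t + x - σ t‖ < 1 := by
  have hex : ∀ t ∈ T, ∃ s ∈ T, ‖t + x - s‖ < 1 := fun t ht =>
    let ⟨s, hs, _⟩ := h.existsUnique (t + x)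
      ((IsUltrametricDist.norm_add_le_max t x).trans (max_le (h.norm_le_one t ht) hx))
    ⟨s, hs⟩
  choose! σ hσT hσ using hex
  refine ⟨σ, (T.finite_toSet.injOn_iff_bijOn_of_mapsTo hσT).1 fun s hs t ht hst => ?_, hσ⟩
  refine h.eq_of_norm_sub_lt_one hs ht ?_
  have : s - t = (s + x - σ s) - (t + x - σ t) := by rw [hst]; ring
  rw [this]
  exact (norm_sub_le_max _ _).trans_lt (max_lt (hσ s hs) (hσ t ht))

end IsDigitSystem

/-- The average of `F` over the `(#T) ^ n` points `t₀ + ϖ t₁ + ⋯ + ϖ ^ (n - 1) tₙ₋₁` with digits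
`tᵢ ∈ T`. It is the integral over the unit ball of a function which is constant on balls of radius
`‖ϖ‖ ^ n`. -/
noncomputable def digitAverage {K : Type*} [Semiring K] (ϖ : K) (T : Finset K) :
    ℕ → (K → ℂ) → ℂ
  | 0, F => F 0
  | n + 1, F => 𝔼 t ∈ T, digitAverage ϖ T n fun x => F (t + ϖ * x)

section DigitAverage

variable {K : Type*} [NormedField K] {ϖ : K} {T : Finset K}

lemma digitAverage_const (hT : T.Nonempty) (n : ℕ) (u : ℂ) :
    digitAverage ϖ T n (fun _ => u) = u := by
  induction n with
  | zero => rfl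
  | succ n ih => simp only [digitAverage, ih, Finset.expect_const hT]

lemma norm_digitAverage_le_one (hT : T.Nonempty) (n : ℕ) {F : K → ℂ} (hF : ∀ x, ‖F x‖ ≤ 1) :
    ‖digitAverage ϖ T n F‖ ≤ 1 := by
  induction n generalizing F with
  | zero => exact hF 0
  | succ n ih =>
    exact (RCLike.norm_expect_le (K := ℂ)).trans (Finset.expect_le hT fun t _ => ih fun x => hF _)

lemma eventually_norm_digitAverage_le_expect {F : K → ℂ} {C : K → ℝ}
    (hF : ∀ t ∈ T, ∀ᶠ n in atTop, ‖digitAverage ϖ T n fun x => F (t + ϖ * x)‖ ≤ C t) :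
    ∀ᶠ n in atTop, ‖digitAverage ϖ T n F‖ ≤ 𝔼 t ∈ T, C t := by
  rw [← eventually_all_finset] at hF
  rw [← map_add_atTop_eq_nat 1, eventually_map]
  exact hF.mono fun n hn => (RCLike.norm_expect_le (K := ℂ)).trans (Finset.expect_le_expect hn)

namespace IsDigitSystem

variable [IsUltrametricDist K]

lemma digitAverage_congr (h : IsDigitSystem ϖ T) (n : ℕ) {F G : K → ℂ}
    (hFG : ∀ x, ‖x‖ ≤ 1 → F x = G x) : digitAverage ϖ T n F = digitAverage ϖ T n G := by
  induction n generalizing F G with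
  | zero => exact hFG 0 (by simp)
  | succ n ih =>
    exact Finset.expect_congr rfl fun t ht => ih fun x hx => hFG _ (h.norm_digit_add_le_one ht hx)

lemma eventually_norm_digitAverage_le_of_discs (h : IsDigitSystem ϖ T) (m : ℕ) {C : ℝ}
    {F : K → ℂ} (hF : ∀ b, ‖b‖ ≤ 1 →
      ∀ᶠ n in atTop, ‖digitAverage ϖ T n fun x => F (b + ϖ ^ m * x)‖ ≤ C) :
    ∀ᶠ n in atTop, ‖digitAverage ϖ T n F‖ ≤ C := by
  induction m generalizing F with
  | zero => simpa using hF 0 (by simp)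
  | succ m ih =>
    rw [← Finset.expect_const h.nonempty C]
    refine eventually_norm_digitAverage_le_expect fun t ht => ih fun b hb => ?_
    simpa only [mul_add, pow_succ', mul_assoc, add_assoc]
      using hF (t + ϖ * b) (h.norm_digit_add_le_one ht hb)

lemma digitAverage_translate (h : IsDigitSystem ϖ T) {n : ℕ} {F : K → ℂ}
    (hF : ∀ x y, ‖x‖ ≤ 1 → ‖y‖ ≤ 1 → ‖x - y‖ ≤ ‖ϖ‖ ^ n → F x = F y) {x : K} (hx : ‖x‖ ≤ 1) :
    digitAverage ϖ T n (fun z => F (z + x)) = digitAverage ϖ T n F := by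
  induction n generalizing F x with
  | zero => exact hF _ _ (by simpa using hx) (by simp) (by simpa using hx)
  | succ n ih =>
    obtain ⟨σ, hσ, hσx⟩ := h.exists_bijOn_translate hx
    refine Finset.expect_nbij σ hσ.mapsTo (fun t ht => ?_) hσ.injOn hσ.surjOn
    obtain ⟨w, hw, hwσ⟩ := h.exists_eq_mul (hσx t ht)
    rw [← ih (F := fun x => F (σ t + ϖ * x)) (fun y z hy hz hyz => ?_) hw]
    · congr 1 with z
      exact congrArg F (by linear_combination hwσ)
    · refine hF _ _ (h.norm_digit_add_le_one (hσ.mapsTo ht) hy)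
        (h.norm_digit_add_le_one (hσ.mapsTo ht) hz) ?_
      rw [add_sub_add_left_eq_sub, ← mul_sub, norm_mul, pow_succ']
      gcongr

end IsDigitSystem

end DigitAverage

section Character

variable {K : Type*} [NontriviallyNormedField K] {ψ : K → ℂ}

namespace IsAddChar

lemma congr_of_norm_sub_lt_one (hψ : IsAddChar ψ) {x y : K} (hxy : ‖x - y‖ < 1) : ψ x = ψ y := by
  rw [← sub_add_cancel x y, hψ.map_add, hψ.triv _ hxy, one_mul]

lemma expect_mul_digit_eq_zero [IsUltrametricDist K] (hψ : IsAddChar ψ) {ϖ : K} {T : Finset K}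
    (h : IsDigitSystem ϖ T) {u : K} (hu : ‖u‖ = 1) : 𝔼 t ∈ T, ψ (u * t) = 0 := by
  obtain ⟨x, hx, hψx⟩ := hψ.nontriv
  have hu0 : u ≠ 0 := norm_ne_zero_iff.1 (hu ▸ one_ne_zero)
  obtain ⟨σ, hσ, hσx⟩ := h.exists_bijOn_translate (x := u⁻¹ * x) (by simpa [hu] using hx)
  have htranslate : 𝔼 t ∈ T, ψ (u * t) * ψ x = 𝔼 t ∈ T, ψ (u * t) := by
    refine Finset.expect_nbij σ hσ.mapsTo (fun t ht => ?_) hσ.injOn hσ.surjOn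
    rw [← hψ.map_add]
    refine hψ.congr_of_norm_sub_lt_one ?_
    rw [← mul_inv_cancel_left₀ hu0 x, ← mul_add, ← mul_sub, norm_mul, hu, one_mul]
    exact hσx t ht
  rw [← Finset.expect_mul] at htranslate
  by_contra hne
  exact hψx ((mul_eq_left₀ hne).1 htranslate)

end IsAddChar

end Character

/-- `d` is the largest index of a coefficient of maximal norm, that is, the number of roots of `H`
in the closed unit ball of an algebraic closure. -/
structure IsWeierstrassDegree {K : Type*} [NormedField K] (H : K[X]) (d : ℕ) : Prop where
  norm_coeff_le : ∀ j, ‖H.coeff j‖ ≤ ‖H.coeff d‖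
  norm_coeff_lt : ∀ j, d < j → ‖H.coeff j‖ < ‖H.coeff d‖

section Vanishing

variable {K : Type*} [NontriviallyNormedField K] [IsUltrametricDist K] {ϖ : K} {T : Finset K}
  {ψ : K → ℂ}

namespace IsDigitSystem

lemma digitAverage_char_eq_zero_of_linear (h : IsDigitSystem ϖ T) (hψ : IsAddChar ψ) {φ : K[X]}
    (h1 : ‖φ.coeff 1‖ = 1) (h2 : ∀ j, 1 < j → ‖φ.coeff j‖ < 1) (n : ℕ) :
    digitAverage ϖ T (n + 1) (fun x => ψ (φ.eval x)) = 0 := by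
  have hlinear : ∀ x, ‖x‖ ≤ 1 → ‖φ.eval x - (φ.coeff 0 + φ.coeff 1 * x)‖ < 1 := fun x hx => by
    obtain ⟨j, hj⟩ :=
      exists_norm_eval_le_norm_coeff (φ - (C (φ.coeff 0) + C (φ.coeff 1) * X)) hx
    simp only [eval_sub, eval_add, eval_mul, eval_C, eval_X] at hj
    refine hj.trans_lt ?_
    match j with
    | 0 => simp
    | 1 => simp [coeff_C]
    | j + 2 => simpa [coeff_C, coeff_X] using h2 (j + 2) (by lia)
  have hdigit : ∀ t ∈ T, digitAverage ϖ T n (fun x => ψ (φ.eval (t + ϖ * x))) =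
      ψ (φ.coeff 0) * ψ (φ.coeff 1 * t) := fun t ht => by
    rw [← hψ.map_add, ← digitAverage_const h.nonempty n (ψ _)]
    refine h.digitAverage_congr n fun x hx => hψ.congr_of_norm_sub_lt_one ?_
    have hsplit : φ.eval (t + ϖ * x) - (φ.coeff 0 + φ.coeff 1 * t) =
        φ.eval (t + ϖ * x) - (φ.coeff 0 + φ.coeff 1 * (t + ϖ * x)) + φ.coeff 1 * (ϖ * x) := by ring
    rw [hsplit]
    refine (IsUltrametricDist.norm_add_le_max _ _).trans_lt
      (max_lt (hlinear _ (h.norm_digit_add_le_one ht hx)) ?_)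
    rw [norm_mul, norm_mul, h1, one_mul]
    exact mul_lt_one_of_nonneg_of_lt_one_left (norm_nonneg ϖ) h.norm_lt_one hx
  rw [digitAverage, Finset.expect_congr rfl hdigit, ← Finset.mul_expect,
    hψ.expect_mul_digit_eq_zero h h1, mul_zero]

/-- Cutting the ball into discs of radius `‖φ'‖⁻¹` makes `φ` linear modulo the maximal ideal on
each of them. -/
lemma eventually_digitAverage_char_eq_zero (h : IsDigitSystem ϖ T) (hψ : IsAddChar ψ)
    {φ : K[X]} (hφ : IsWeierstrassDegree (derivative φ) 0) {R : ℕ}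
    (h1 : 1 ≤ ‖φ.coeff 1‖ * ‖ϖ‖ ^ R)
    (h2 : ∀ j, 1 < j → ‖φ.coeff j‖ * ‖ϖ‖ ^ R < ‖φ.coeff 1‖) :
    ∀ᶠ n in atTop, digitAverage ϖ T n (fun x => ψ (φ.eval x)) = 0 := by
  have hϖ := h.norm_pos
  have hϖR : ‖ϖ‖ ^ R ≤ 1 := pow_le_one₀ hϖ.le h.norm_lt_one.le
  obtain ⟨m, hm⟩ := h.exists_norm_mul_pow_eq_one
    (h1.trans (mul_le_of_le_one_right (norm_nonneg _) hϖR))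
  have hmR : ‖ϖ‖ ^ m ≤ ‖ϖ‖ ^ R := le_of_mul_le_mul_left (hm.trans_le h1)
    (pos_of_mul_pos_left (hm ▸ one_pos) (pow_pos hϖ m).le)
  simp_rw [← norm_le_zero_iff (E := ℂ)]
  refine h.eventually_norm_digitAverage_le_of_discs m fun b hb => ?_
  have hslope : ‖(taylor b φ).coeff 1‖ = ‖φ.coeff 1‖ := by
    have := norm_taylor_coeff_eq hb hφ.norm_coeff_lt
    rwa [taylor_coeff_zero, ← taylor_coeff_one, coeff_derivative, zero_add,
      Nat.cast_zero, zero_add, mul_one] at this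
  rw [eventually_atTop]
  refine ⟨1, fun n hn => ?_⟩
  obtain ⟨n, rfl⟩ := Nat.exists_eq_add_of_le' hn
  simp_rw [← discComp_eval]
  refine norm_le_zero_iff.2 (h.digitAverage_char_eq_zero_of_linear hψ ?_ (fun j hj => ?_) n)
  · rw [discComp_coeff, pow_one, norm_mul, norm_pow, hslope, hm]
  · have hcoeff : ‖(taylor b φ).coeff j‖ < ‖φ.coeff 1‖ / ‖ϖ‖ ^ R :=
      norm_taylor_coeff_lt hb fun i hi => (lt_div_iff₀ (pow_pos hϖ R)).2 (h2 i (hj.trans_le hi))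
    rw [discComp_coeff, norm_mul, norm_pow, norm_pow, ← hm]
    calc ‖(taylor b φ).coeff j‖ * (‖ϖ‖ ^ m) ^ j
        ≤ ‖(taylor b φ).coeff j‖ * (‖ϖ‖ ^ m) ^ 2 := by
          gcongr ?_ * ?_
          exact pow_le_pow_of_le_one (by positivity) (hmR.trans hϖR) hj
      _ ≤ ‖(taylor b φ).coeff j‖ * (‖ϖ‖ ^ R * ‖ϖ‖ ^ m) := by rw [sq]; gcongr
      _ < ‖φ.coeff 1‖ * ‖ϖ‖ ^ m := by
          rw [← mul_assoc]
          gcongr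
          exact (lt_div_iff₀ (pow_pos hϖ R)).1 hcoeff

end IsDigitSystem

end Vanishing

section WeierstrassDegree

lemma exists_isWeierstrassDegree {K : Type*} [NormedField K] {H : K[X]} (hH : H ≠ 0) :
    ∃ d, IsWeierstrassDegree H d := by
  obtain ⟨d, hd, hmax⟩ := H.support.exists_max_image
    (fun j => (toLex (‖H.coeff j‖, j) : ℝ ×ₗ ℕ)) (by simpa using hH)
  have hlex : ∀ j, ‖H.coeff j‖ < ‖H.coeff d‖ ∨ ‖H.coeff j‖ = ‖H.coeff d‖ ∧ j ≤ d := fun j => by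
    by_cases hj : H.coeff j = 0
    · simpa [hj] using Or.inl hd
    · simpa [Prod.Lex.toLex_le_toLex] using hmax j (by simpa using hj)
  exact ⟨d, fun j => (hlex j).elim le_of_lt fun h => h.1.le,
    fun j hj => (hlex j).resolve_right fun h => hj.not_ge h.2⟩

lemma sum_rootMultiplicity_le_natDegree {R ι : Type*} [CommRing R] [IsDomain R] (G : R[X])
    {s : Finset ι} {r : ι → R} (hr : Set.InjOn r s) :
    ∑ i ∈ s, G.rootMultiplicity (r i) ≤ G.natDegree := by
  simp_rw [← count_roots]
  calc ∑ i ∈ s, G.roots.count (r i) = ∑ a ∈ s.image r, G.roots.count a :=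
        (Finset.sum_image (f := fun a => G.roots.count a) hr).symm
    _ ≤ ∑ a ∈ s.image r ∪ G.roots.toFinset, G.roots.count a :=
        Finset.sum_le_sum_of_subset Finset.subset_union_left
    _ = G.roots.card := Multiset.sum_count_eq_card fun a ha =>
        Finset.mem_union_right _ (Multiset.mem_toFinset.2 ha)
    _ ≤ G.natDegree := card_roots' G

namespace IsWeierstrassDegree

variable {K : Type*} [NormedField K] {H : K[X]} {d : ℕ}

lemma coeff_ne_zero (hH : IsWeierstrassDegree H d) : H.coeff d ≠ 0 :=
  norm_pos_iff.1 ((norm_nonneg _).trans_lt (hH.norm_coeff_lt (d + 1) d.lt_succ_self))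

lemma C_mul (hH : IsWeierstrassDegree H d) {u : K} (hu : u ≠ 0) :
    IsWeierstrassDegree (C u * H) d := by
  have hu' := norm_pos_iff.2 hu
  constructor
  · intro j
    simpa [hu'] using hH.norm_coeff_le j
  · intro j hj
    simpa [hu'] using hH.norm_coeff_lt j hj

end IsWeierstrassDegree

section Reduction

open scoped NormedField Valued

variable {K : Type*} [NontriviallyNormedField K] [IsUltrametricDist K]

lemma residue_eq_zero_iff_norm_lt_one (x : 𝒪[K]) :
    IsLocalRing.residue 𝒪[K] x = 0 ↔ ‖(x : K)‖ < 1 := by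
  rw [IsLocalRing.residue_eq_zero_iff, IsLocalRing.mem_maximalIdeal, mem_nonunits_iff,
    Valued.integer.isUnit_iff_norm_eq_one]
  exact (Valued.integer.norm_le_one x).lt_iff_ne.symm

lemma IsWeierstrassDegree.le_rootMultiplicity_reduction {g : 𝒪[K][X]}
    (hg : g.map (IsLocalRing.residue 𝒪[K]) ≠ 0) {t : 𝒪[K]} {ϖ : K} (hϖ0 : ϖ ≠ 0) (hϖ1 : ‖ϖ‖ < 1)
    {d : ℕ} (hd : IsWeierstrassDegree (discComp (g.map 𝒪[K].subtype) t ϖ) d) :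
    d ≤ (g.map (IsLocalRing.residue 𝒪[K])).rootMultiplicity (IsLocalRing.residue 𝒪[K] t) := by
  rw [le_rootMultiplicity_iff hg, X_sub_C_pow_dvd_iff, ← taylor_apply, ← map_taylor, X_pow_dvd_iff]
  intro i hi
  have hϖ := norm_pos_iff.2 hϖ0
  have hcoeff : ∀ j, (discComp (g.map 𝒪[K].subtype) t ϖ).coeff j =
      ((taylor t g).coeff j : K) * ϖ ^ j := fun j => by
    rw [discComp_coeff]
    exact congrArg (fun P : K[X] => P.coeff j * ϖ ^ j) (map_taylor g t 𝒪[K].subtype).symm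
      |>.trans (by rw [coeff_map]; rfl)
  rw [coeff_map, residue_eq_zero_iff_norm_lt_one, ← mul_lt_iff_lt_one_left (pow_pos hϖ i)]
  calc ‖((taylor t g).coeff i : K)‖ * ‖ϖ‖ ^ i ≤ ‖((taylor t g).coeff d : K)‖ * ‖ϖ‖ ^ d := by
        simpa only [hcoeff, norm_mul, norm_pow] using hd.norm_coeff_le i
    _ ≤ ‖ϖ‖ ^ d := mul_le_of_le_one_left (by positivity) (Valued.integer.norm_le_one _)
    _ < ‖ϖ‖ ^ i := pow_lt_pow_right_of_lt_one₀ hϖ hϖ1 hi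

namespace IsDigitSystem

variable {ϖ : K} {T : Finset K} {H : K[X]} {d : ℕ}

lemma sum_weierstrassDegree_le_of_norm_coeff_eq_one (h : IsDigitSystem ϖ T)
    (hH : IsWeierstrassDegree H d) (hd : ‖H.coeff d‖ = 1) {δ : K → ℕ}
    (hδ : ∀ t ∈ T, IsWeierstrassDegree (discComp H t ϖ) (δ t)) : ∑ t ∈ T, δ t ≤ d := by
  have hcoeffs : (↑H.coeffs : Set K) ⊆ 𝒪[K] := fun x hx => by
    obtain ⟨j, -, rfl⟩ := mem_coeffs_iff.1 hx
    exact Valued.integer.mem_iff.2 (hd ▸ hH.norm_coeff_le j)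
  obtain ⟨g, rfl⟩ : ∃ g : 𝒪[K][X], g.map 𝒪[K].subtype = H :=
    ⟨H.toSubring 𝒪[K] hcoeffs, map_toSubring H 𝒪[K] hcoeffs⟩
  set G := g.map (IsLocalRing.residue 𝒪[K])
  have hGcoeff : ∀ j, G.coeff j = 0 ↔ ‖(g.map 𝒪[K].subtype).coeff j‖ < 1 := fun j => by
    rw [coeff_map, residue_eq_zero_iff_norm_lt_one, coeff_map]; rfl
  have hG : G ≠ 0 := fun hG => ((hGcoeff d).1 (by rw [hG, coeff_zero])).ne hd
  have hdeg : G.natDegree ≤ d := natDegree_le_iff_coeff_eq_zero.2 fun j hj =>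
    (hGcoeff j).2 (hd ▸ hH.norm_coeff_lt j hj)
  have hlift : ∀ t ∈ T, ∃ s : 𝒪[K], (s : K) = t := fun t ht =>
    ⟨⟨t, Valued.integer.mem_iff.2 (h.norm_le_one t ht)⟩, rfl⟩
  choose! τ hτ using hlift
  have hinj : Set.InjOn (fun t => IsLocalRing.residue 𝒪[K] (τ t)) T := fun s hs t ht hst => by
    rw [← sub_eq_zero, ← map_sub, residue_eq_zero_iff_norm_lt_one] at hst
    refine h.eq_of_norm_sub_lt_one hs ht ?_
    rwa [← hτ s hs, ← hτ t ht]
  calc ∑ t ∈ T, δ t ≤ ∑ t ∈ T, G.rootMultiplicity (IsLocalRing.residue 𝒪[K] (τ t)) :=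
        Finset.sum_le_sum fun t ht => IsWeierstrassDegree.le_rootMultiplicity_reduction hG
          h.ne_zero h.norm_lt_one ((hτ t ht).symm ▸ hδ t ht)
    _ ≤ d := (sum_rootMultiplicity_le_natDegree G hinj).trans hdeg

lemma sum_weierstrassDegree_le (h : IsDigitSystem ϖ T) (hH : IsWeierstrassDegree H d) {δ : K → ℕ}
    (hδ : ∀ t ∈ T, IsWeierstrassDegree (discComp H t ϖ) (δ t)) : ∑ t ∈ T, δ t ≤ d := by
  have hu : (H.coeff d)⁻¹ ≠ 0 := inv_ne_zero hH.coeff_ne_zero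
  refine h.sum_weierstrassDegree_le_of_norm_coeff_eq_one (hH.C_mul hu) ?_ fun t ht => ?_
  · rw [coeff_C_mul, inv_mul_cancel₀ hH.coeff_ne_zero, norm_one]
  · rw [discComp_C_mul]
    exact (hδ t ht).C_mul hu

/-- On `b + ϖ ^ n O` the polynomial `H` has no zeros when its Weierstrass degree there is `0`; at
most `d` of the `(#T) ^ n` discs of this radius are of another kind. -/
lemma eventually_norm_digitAverage_le_of_vanishing (h : IsDigitSystem ϖ T)
    (hH : IsWeierstrassDegree H d) (n : ℕ) {F : K → ℂ} (hF : ∀ x, ‖F x‖ ≤ 1)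
    (hvanish : ∀ b, ‖b‖ ≤ 1 → IsWeierstrassDegree (discComp H b (ϖ ^ n)) 0 →
      ∀ᶠ m in atTop, digitAverage ϖ T m (fun x => F (b + ϖ ^ n * x)) = 0) :
    ∀ᶠ m in atTop, ‖digitAverage ϖ T m F‖ ≤ (T.card : ℝ)⁻¹ ^ n * d := by
  induction n generalizing H d F with
  | zero =>
    rcases Nat.eq_zero_or_pos d with rfl | hd
    · refine (hvanish 0 (by simp) (by simpa [discComp] using hH)).mono fun m hm => ?_
      simp only [pow_zero, one_mul, zero_add] at hm
      simp [hm]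
    · refine Eventually.of_forall fun m => (norm_digitAverage_le_one h.nonempty m hF).trans ?_
      simpa [Nat.one_le_iff_ne_zero] using hd.ne'
  | succ n ih =>
    have hδ : ∀ t, ∃ δ, IsWeierstrassDegree (discComp H t ϖ) δ := fun t =>
      exists_isWeierstrassDegree (discComp_ne_zero
        (ne_of_apply_ne (coeff · d) (by simpa using hH.coeff_ne_zero)) t h.ne_zero)
    choose δ hδ using hδ
    have hdisc : ∀ t ∈ T, ∀ᶠ m in atTop, ‖digitAverage ϖ T m fun x => F (t + ϖ * x)‖ ≤
        (T.card : ℝ)⁻¹ ^ n * δ t := fun t ht => by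
      refine ih (hδ t) (fun x => hF _) fun b hb hdegree => ?_
      rw [discComp_discComp, ← pow_succ'] at hdegree
      simpa only [mul_add, pow_succ', mul_assoc, add_assoc]
        using hvanish _ (h.norm_digit_add_le_one ht hb) hdegree
    refine (eventually_norm_digitAverage_le_expect hdisc).mono fun m hm => hm.trans ?_
    rw [← Finset.mul_expect, Finset.expect_eq_sum_div_card, ← Nat.cast_sum, pow_succ, mul_assoc,
      div_eq_inv_mul]
    gcongr
    exact h.sum_weierstrassDegree_le hH fun t _ => hδ t

end IsDigitSystem

end Reduction

end WeierstrassDegree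

/-- `c b j` is the `j`-th coefficient of the expansion of a function `f` about `b`. On every disc of
radius `ρ ^ R` in the unit ball, the terms of degree greater than `k` in this expansion are
dominated, together with their derivatives, by the derivative of the term of degree `k`. -/
structure IsTaylorDominant {K : Type*} [NormedField K] (ρ : ℝ) (k R : ℕ) (c : K → ℕ → K) :
    Prop where
  pow_le_norm_natCast : ∀ j : ℕ, 1 ≤ j → j ≤ k → ρ ^ R ≤ ‖(j : K)‖
  one_le : ∀ b, ‖b‖ ≤ 1 → 1 ≤ ‖(k : K) * c b k‖
  lt : ∀ b, ‖b‖ ≤ 1 → ∀ i, 1 ≤ i → ‖c b (k + i)‖ * ρ ^ (R * i) < ‖(k : K) * c b k‖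

section Coefficients

variable {K : Type*} [NormedField K] {ϖ : K} {T : Finset K} {k R : ℕ} {f : K[X]} {y : K}

lemma norm_coeff_C_mul_discComp_pow (φ : K[X]) (b y ϖ : K) (N j : ℕ) :
    ‖(C y * discComp φ b (ϖ ^ N)).coeff j‖ =
      ‖y‖ * ‖ϖ‖ ^ (N * j) * ‖(taylor b φ).coeff j‖ := by
  rw [coeff_C_mul, discComp_coeff, norm_mul, norm_mul, norm_pow, norm_pow, pow_mul]
  ring

lemma norm_coeff_derivative {φ : K[X]} {j : ℕ} (hj : 1 ≤ j) :
    ‖(derivative φ).coeff (j - 1)‖ = ‖(j : K) * φ.coeff j‖ := by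
  obtain ⟨j, rfl⟩ := Nat.exists_eq_add_of_le' hj
  rw [Nat.add_sub_cancel, coeff_derivative, mul_comm, Nat.cast_succ]

namespace IsTaylorDominant

lemma norm_coeff_add_lt (hf : IsTaylorDominant ‖ϖ‖ k R fun b => (taylor b f).coeff)
    (h : IsDigitSystem ϖ T) {b : K} (hb : ‖b‖ ≤ 1) (hy : y ≠ 0) {N : ℕ} (hN : R ≤ N)
    {i : ℕ} (hi : 1 ≤ i) :
    ‖(C y * discComp f b (ϖ ^ N)).coeff (k + i)‖ <
      ‖(k : K) * (C y * discComp f b (ϖ ^ N)).coeff k‖ := by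
  have hϖ := h.norm_pos
  have := norm_pos_iff.2 hy
  rw [norm_mul, norm_coeff_C_mul_discComp_pow, norm_coeff_C_mul_discComp_pow, mul_left_comm,
    ← norm_mul, mul_add, pow_add]
  calc ‖y‖ * (‖ϖ‖ ^ (N * k) * ‖ϖ‖ ^ (N * i)) * ‖(taylor b f).coeff (k + i)‖
      ≤ ‖y‖ * (‖ϖ‖ ^ (N * k) * ‖ϖ‖ ^ (R * i)) * ‖(taylor b f).coeff (k + i)‖ := by
        gcongr ‖y‖ * (_ * ?_) * _
        exact pow_le_pow_of_le_one hϖ.le h.norm_lt_one.le (Nat.mul_le_mul_right i hN)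
    _ = ‖y‖ * ‖ϖ‖ ^ (N * k) * (‖(taylor b f).coeff (k + i)‖ * ‖ϖ‖ ^ (R * i)) := by ring
    _ < ‖y‖ * ‖ϖ‖ ^ (N * k) * ‖(k : K) * (taylor b f).coeff k‖ := by
        gcongr
        exact hf.lt b hb i hi

lemma exists_isWeierstrassDegree_le [IsUltrametricDist K]
    (hf : IsTaylorDominant ‖ϖ‖ k R fun b => (taylor b f).coeff) (h : IsDigitSystem ϖ T) (hk : 1 ≤ k)
    {b : K} (hb : ‖b‖ ≤ 1) (hy : y ≠ 0) :
    ∃ d ≤ k, IsWeierstrassDegree (derivative (C y * discComp f b (ϖ ^ R))) d := by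
  set φ := C y * discComp f b (ϖ ^ R)
  have hlt : ∀ j, k ≤ j → ‖(derivative φ).coeff j‖ < ‖(derivative φ).coeff (k - 1)‖ :=
    fun j hj => by
      obtain ⟨i, rfl⟩ := Nat.exists_eq_add_of_le hj
      rw [norm_coeff_derivative hk, ← Nat.add_sub_cancel (k + i) 1,
        norm_coeff_derivative (Nat.le_add_left 1 _)]
      exact (norm_natCast_mul_le _ _).trans_lt
        (hf.norm_coeff_add_lt h hb hy le_rfl (Nat.le_add_left 1 i))
  have hne : derivative φ ≠ 0 := fun h0 => by simpa [h0] using hlt k le_rfl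
  obtain ⟨d, hd⟩ := exists_isWeierstrassDegree hne
  refine ⟨d, ?_, hd⟩
  by_contra! hkd
  exact (hlt d hkd.le).not_ge (hd.norm_coeff_le _)

end IsTaylorDominant

end Coefficients

section Decay

variable {K : Type*} [NontriviallyNormedField K] [IsUltrametricDist K] {ϖ : K} {T : Finset K}
  {k R : ℕ} {f : K[X]} {y : K} {ψ : K → ℂ}

namespace IsTaylorDominant

/-- Here the derivative is dominated by its constant term, so that `φ` is dominated, up to the
loss `‖ϖ‖ ^ R` caused by dividing by the indices `j ≤ k`, by its linear term. -/
lemma eventually_digitAverage_eq_zero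
    (hf : IsTaylorDominant ‖ϖ‖ k R fun b => (taylor b f).coeff) (h : IsDigitSystem ϖ T)
    (hψ : IsAddChar ψ) (hk : 1 ≤ k) {N : ℕ} (hN : R ≤ N)
    (hy : 1 ≤ ‖y‖ * ‖ϖ‖ ^ (N * k + R)) {b : K} (hb : ‖b‖ ≤ 1)
    (hdegree : IsWeierstrassDegree (derivative (C y * discComp f b (ϖ ^ N))) 0) :
    ∀ᶠ m in atTop,
      digitAverage ϖ T m (fun x => ψ ((C y * discComp f b (ϖ ^ N)).eval x)) = 0 := by
  have hy0 : y ≠ 0 := by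
    rintro rfl
    simp only [norm_zero, zero_mul] at hy
    exact hy.not_gt one_pos
  set φ := C y * discComp f b (ϖ ^ N) with hφ
  have hslope : ‖(derivative φ).coeff 0‖ = ‖φ.coeff 1‖ := by
    simpa using norm_coeff_derivative (φ := φ) le_rfl
  have hkφ : ‖(k : K) * φ.coeff k‖ ≤ ‖φ.coeff 1‖ := by
    rw [← norm_coeff_derivative hk, ← hslope]
    exact hdegree.norm_coeff_le _
  have hϖR : ‖ϖ‖ ^ R ≤ 1 := pow_le_one₀ h.norm_pos.le h.norm_lt_one.le
  refine h.eventually_digitAverage_char_eq_zero hψ hdegree (R := R) ?_ fun j hj => ?_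
  · calc 1 ≤ ‖y‖ * ‖ϖ‖ ^ (N * k + R) := hy
      _ ≤ ‖y‖ * ‖ϖ‖ ^ (N * k + R) * ‖(k : K) * (taylor b f).coeff k‖ :=
          le_mul_of_one_le_right (by positivity) (hf.one_le b hb)
      _ = ‖(k : K) * φ.coeff k‖ * ‖ϖ‖ ^ R := by
          rw [norm_mul, norm_mul, hφ, norm_coeff_C_mul_discComp_pow]; ring
      _ ≤ ‖φ.coeff 1‖ * ‖ϖ‖ ^ R := by gcongr
  rcases le_or_gt j k with hjk | hjk
  · calc ‖φ.coeff j‖ * ‖ϖ‖ ^ R ≤ ‖(j : K) * φ.coeff j‖ := by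
          rw [norm_mul, mul_comm]
          gcongr
          exact hf.pow_le_norm_natCast j hj.le hjk
      _ = ‖(derivative φ).coeff (j - 1)‖ := (norm_coeff_derivative hj.le).symm
      _ < ‖φ.coeff 1‖ := hslope ▸ hdegree.norm_coeff_lt _ (Nat.sub_pos_of_lt hj)
  · obtain ⟨i, rfl⟩ := Nat.exists_eq_add_of_le hjk.le
    exact (mul_le_of_le_one_right (norm_nonneg _) hϖR).trans_lt
      ((hf.norm_coeff_add_lt h hb hy0 hN (by lia)).trans_le hkφ)

lemma eventually_norm_digitAverage_le_pow
    (hf : IsTaylorDominant ‖ϖ‖ k R fun b => (taylor b f).coeff) (h : IsDigitSystem ϖ T)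
    (hψ : IsAddChar ψ) (hk : 1 ≤ k) {n : ℕ}
    (hy : 1 ≤ ‖y‖ * ‖ϖ‖ ^ ((R + n) * k + R)) :
    ∀ᶠ m in atTop,
      ‖digitAverage ϖ T m fun x => ψ (y * f.eval x)‖ ≤ (T.card : ℝ)⁻¹ ^ n * k := by
  have hy0 : y ≠ 0 := by
    rintro rfl
    simp only [norm_zero, zero_mul] at hy
    exact hy.not_gt one_pos
  have hϖR : ‖ϖ ^ R‖ ≤ 1 := by
    rw [norm_pow]
    exact pow_le_one₀ h.norm_pos.le h.norm_lt_one.le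
  refine h.eventually_norm_digitAverage_le_of_discs R fun b hb => ?_
  obtain ⟨d, hdk, hd⟩ := hf.exists_isWeierstrassDegree_le h hk hb hy0
  set φ := C y * discComp f b (ϖ ^ R) with hφ
  have heval : ∀ x, y * f.eval (b + ϖ ^ R * x) = φ.eval x := fun x => by
    rw [eval_mul, eval_C, discComp_eval]
  simp_rw [heval]
  have hbound : ∀ᶠ m in atTop,
      ‖digitAverage ϖ T m fun x => ψ (φ.eval x)‖ ≤ (T.card : ℝ)⁻¹ ^ n * d := by
    refine h.eventually_norm_digitAverage_le_of_vanishing hd n (fun x => (hψ.norm_eq _).le)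
      fun a ha hdegree => ?_
    have hsubdisc : discComp φ a (ϖ ^ n) =
        C y * discComp f (b + ϖ ^ R * a) (ϖ ^ (R + n)) := by
      rw [hφ, discComp_C_mul, discComp_discComp, pow_add]
    simp_rw [← discComp_eval, hsubdisc]
    refine hf.eventually_digitAverage_eq_zero h hψ hk (Nat.le_add_right R n) hy
      (norm_add_mul_le_one hb hϖR ha) ?_
    rw [← hsubdisc, derivative_discComp]
    exact hdegree.C_mul (pow_ne_zero n h.ne_zero)
  refine hbound.mono fun m hm => hm.trans ?_
  gcongr

lemma eventually_norm_digitAverage_le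
    (hf : IsTaylorDominant ‖ϖ‖ k R fun b => (taylor b f).coeff) (h : IsDigitSystem ϖ T)
    (hψ : IsAddChar ψ) (hk : 1 ≤ k) (hϖ : ‖ϖ‖ = (T.card : ℝ)⁻¹) (hy : y ≠ 0) :
    ∀ᶠ m in atTop, ‖digitAverage ϖ T m fun x => ψ (y * f.eval x)‖ ≤
      k * (T.card : ℝ) ^ (2 * R + 1) * ‖y‖ ^ (-(1 : ℝ) / k) := by
  have hk0 : k ≠ 0 := Nat.one_le_iff_ne_zero.1 hk
  set Q := (T.card : ℝ) with hQ
  have hQ0 : 0 < Q := h.card_pos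
  have hQ1 : 1 < Q := by
    have := h.norm_lt_one
    rwa [hϖ, inv_lt_one₀ hQ0] at this
  set x := ‖y‖ ^ (k : ℝ)⁻¹ with hx
  have hx0 : 0 < x := Real.rpow_pos_of_pos (norm_pos_iff.2 hy) _
  have hxk : x ^ k = ‖y‖ := Real.rpow_inv_natCast_pow (norm_nonneg y) hk0
  rw [neg_div, one_div, Real.rpow_neg (norm_nonneg y), ← hx]
  rcases le_or_gt (Q ^ (2 * R)) x with hlarge | hsmall
  · obtain ⟨n, hn, hn'⟩ :=
      exists_nat_pow_near ((one_le_div₀ (pow_pos hQ0 (2 * R))).2 hlarge) hQ1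
    rw [le_div_iff₀ (pow_pos hQ0 _), ← pow_add] at hn
    rw [div_lt_iff₀ (pow_pos hQ0 _)] at hn'
    have hyn : 1 ≤ ‖y‖ * ‖ϖ‖ ^ ((R + n) * k + R) := by
      rw [hϖ, inv_pow, ← div_eq_mul_inv, one_le_div₀ (by positivity), ← hxk]
      calc Q ^ ((R + n) * k + R) ≤ Q ^ ((n + 2 * R) * k) :=
            pow_le_pow_right₀ hQ1.le (by nlinarith)
        _ ≤ x ^ k := by rw [pow_mul]; gcongr
    refine (hf.eventually_norm_digitAverage_le_pow h hψ hk hyn).mono fun m hm => hm.trans ?_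
    rw [mul_comm, mul_assoc]
    gcongr
    rw [inv_pow, ← div_eq_mul_inv, le_div_iff₀ hx0, inv_mul_le_iff₀ (pow_pos hQ0 n)]
    exact hn'.le.trans_eq (by ring)
  · refine Eventually.of_forall fun m =>
      (norm_digitAverage_le_one h.nonempty m fun x => (hψ.norm_eq _).le).trans ?_
    rw [← div_eq_mul_inv, one_le_div₀ hx0]
    calc x ≤ Q ^ (2 * R + 1) := hsmall.le.trans (pow_le_pow_right₀ hQ1.le (by lia))
      _ ≤ k * Q ^ (2 * R + 1) :=
          le_mul_of_one_le_left (by positivity) (by exact_mod_cast hk)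

end IsTaylorDominant

end Decay

section Invariance

variable {G : Type*} [AddGroup G] [MeasurableSpace G] (μ : Measure G) [NeZero μ]
  [μ.IsAddLeftInvariant]

lemma aemeasurable_add_left (g : G) : AEMeasurable (g + ·) μ :=
  aemeasurable_of_map_neZero (by rwa [map_add_left_eq_self μ g])

lemma measure_preimage_add_left (g : G) (A : Set G) : μ ((g + ·) ⁻¹' A) = μ A := by
  have hle : ∀ (g : G) (A : Set G), μ ((g + ·) ⁻¹' A) ≤ μ A := fun g A =>
    calc μ ((g + ·) ⁻¹' A) ≤ μ ((g + ·) ⁻¹' toMeasurable μ A) := by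
          gcongr; exact subset_toMeasurable μ A
      _ = μ.map (g + ·) (toMeasurable μ A) :=
          (Measure.map_apply_of_aemeasurable (aemeasurable_add_left μ g)
            (measurableSet_toMeasurable μ A)).symm
      _ = μ A := by rw [map_add_left_eq_self, measure_toMeasurable]
  refine le_antisymm (hle g A) ?_
  simpa [← Set.preimage_comp, Function.comp_def] using hle (-g) ((g + ·) ⁻¹' A)

lemma map_add_left_restrict {g : G} {S : Set G} (hS : (g + ·) ⁻¹' S = S) :
    (μ.restrict S).map (g + ·) = μ.restrict S := by
  have hg := aemeasurable_add_left μ g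
  ext t ht
  rw [Measure.map_apply_of_aemeasurable hg.restrict ht, Measure.restrict_apply ht,
    Measure.restrict_apply₀ (hg.restrict.nullMeasurableSet_preimage ht),
    ← measure_preimage_add_left μ g (t ∩ S), Set.preimage_inter, hS]

end Invariance

section Integral

lemma integrable_and_integral_digitAverage {K : Type*} [NormedField K] [IsUltrametricDist K]
    {ϖ : K} {T : Finset K} (h : IsDigitSystem ϖ T) {Ω : Type*} [MeasurableSpace Ω] {ν : Measure Ω}
    {I : ℂ} {G : K → Ω → ℂ}
    (hG : ∀ z, ‖z‖ ≤ 1 → Integrable (G z) ν ∧ ∫ x, G z x ∂ν = I) (n : ℕ) :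
    Integrable (fun x => digitAverage ϖ T n fun z => G z x) ν ∧
      ∫ x, digitAverage ϖ T n (fun z => G z x) ∂ν = I := by
  induction n generalizing G with
  | zero => exact hG 0 (by simp)
  | succ n ih =>
    have hdigit := fun t ht => ih fun z hz => hG (t + ϖ * z) (h.norm_digit_add_le_one ht hz)
    simp only [digitAverage, Finset.expect_eq_sum_div_card]
    refine ⟨(integrable_finsetSum T fun t ht => (hdigit t ht).1).div_const _, ?_⟩
    rw [integral_div, integral_finsetSum T fun t ht => (hdigit t ht).1,
      ← Finset.expect_eq_sum_div_card, Finset.expect_congr rfl fun t ht => (hdigit t ht).2,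
      Finset.expect_const h.nonempty]

variable {K : Type*} [NontriviallyNormedField K] [IsUltrametricDist K] {ϖ : K} {T : Finset K}
  [MeasurableSpace K] {μ : Measure K} [μ.IsAddLeftInvariant]

/-- The two sides are equal when `F` is integrable; otherwise the integral is `0` by convention. -/
lemma norm_setIntegral_le_norm_digitAverage (h : IsDigitSystem ϖ T)
    (hμ : μ {x | ‖x‖ ≤ 1} = 1) {F : K → ℂ} {n : ℕ}
    (hF : ∀ x y, ‖x‖ ≤ 1 → ‖y‖ ≤ 1 → ‖x - y‖ ≤ ‖ϖ‖ ^ n → F x = F y) :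
    ‖∫ x in {x | ‖x‖ ≤ 1}, F x ∂μ‖ ≤ ‖digitAverage ϖ T n F‖ := by
  have : NeZero μ := ⟨by rintro rfl; simp at hμ⟩
  set ν := μ.restrict {x | ‖x‖ ≤ 1} with hν
  have : IsProbabilityMeasure ν := ⟨by rw [hν, Measure.restrict_apply_univ, hμ]⟩
  by_cases hint : Integrable F ν
  swap
  · rw [integral_undef hint, norm_zero]
    exact norm_nonneg _
  have htranslate : ∀ g, ‖g‖ ≤ 1 →
      Integrable (fun x => F (g + x)) ν ∧ ∫ x, F (g + x) ∂ν = ∫ x, F x ∂ν := fun g hg => by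
    have hball : (g + ·) ⁻¹' {x : K | ‖x‖ ≤ 1} = {x | ‖x‖ ≤ 1} := by
      ext x
      refine ⟨fun hx => ?_, fun hx => (IsUltrametricDist.norm_add_le_max _ _).trans (max_le hg hx)⟩
      simpa using (norm_sub_le_max (g + x) g).trans (max_le hx hg)
    have hmap : ν.map (g + ·) = ν := map_add_left_restrict μ hball
    have hmeas : AEMeasurable (g + ·) ν := (aemeasurable_add_left μ g).restrict
    rw [← hmap] at hint
    refine ⟨hint.comp_aemeasurable hmeas, ?_⟩
    rw [← integral_map hmeas hint.aestronglyMeasurable, hmap]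
  obtain ⟨hint', hintegral⟩ := integrable_and_integral_digitAverage h htranslate n
  have hconst : (fun x => digitAverage ϖ T n fun z => F (z + x)) =ᵐ[ν]
      fun _ => digitAverage ϖ T n F := by
    rw [hν, Filter.EventuallyEq, ae_restrict_iff₀
      (hint'.aestronglyMeasurable.nullMeasurableSet_eq_fun aestronglyMeasurable_const)]
    exact Eventually.of_forall fun x hx => h.digitAverage_translate hF hx
  rw [← hintegral, integral_congr_ae hconst, integral_const, probReal_univ, one_smul]

lemma norm_setIntegral_char_le_of_eventually (h : IsDigitSystem ϖ T) (hμ : μ {x | ‖x‖ ≤ 1} = 1)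
    {ψ : K → ℂ} (hψ : IsAddChar ψ) {f : K → K} {P : K[X]} {y : K} {C : ℝ}
    (hfP : ∀ x, ‖x‖ ≤ 1 → ‖y * f x - y * P.eval x‖ < 1)
    (hP : ∀ᶠ n in atTop, ‖digitAverage ϖ T n fun x => ψ (y * P.eval x)‖ ≤ C) :
    ‖∫ x in {x | ‖x‖ ≤ 1}, ψ (y * f x) ∂μ‖ ≤ C := by
  have hlim : Tendsto (fun n : ℕ => ‖y‖ * P.supNorm * ‖ϖ‖ ^ n) atTop (nhds 0) := by
    simpa using (tendsto_pow_atTop_nhds_zero_of_lt_one h.norm_pos.le h.norm_lt_one).const_mul _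
  obtain ⟨n, hn, hyn⟩ := (hP.and (hlim.eventually_lt_const one_pos)).exists
  have hψfP : ∀ x, ‖x‖ ≤ 1 → ψ (y * f x) = ψ (y * P.eval x) := fun x hx =>
    hψ.congr_of_norm_sub_lt_one (hfP x hx)
  rw [← h.digitAverage_congr n hψfP] at hn
  refine (norm_setIntegral_le_norm_digitAverage h hμ fun a b ha hb hab => ?_).trans hn
  rw [hψfP a ha, hψfP b hb]
  refine hψ.congr_of_norm_sub_lt_one ?_
  rw [← mul_sub, norm_mul]
  refine lt_of_le_of_lt ?_ hyn
  rw [mul_assoc]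
  gcongr
  exact (norm_eval_sub_eval_le P.le_supNorm ha hb).trans
    (mul_le_mul_of_nonneg_left hab P.supNorm_nonneg)

end Integral

section PowerSeries

variable {K : Type*} [NontriviallyNormedField K]

/-- The coefficient of `t ^ j` in the expansion of the power series `∑ i, a i * (b + t) ^ i` in
powers of `t`: the analogue of `(taylor b P).coeff j` for power series. -/
noncomputable def taylorCoeff (a : ℕ → K) (b : K) (j : ℕ) : K :=
  ∑' m, ((m + j).choose j : K) * a (m + j) * b ^ m

lemma taylorCoeff_zero (a : ℕ → K) (b : K) : taylorCoeff a b 0 = pseval a b := by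
  simp only [taylorCoeff, pseval, add_zero, Nat.choose_zero_right, Nat.cast_one, one_mul]

lemma shiftCoeff_one (a : ℕ → K) (b : K) {c : K} (hc : c ≠ 0) :
    shiftCoeff a b c 1 = taylorCoeff a b 1 := by
  simp only [shiftCoeff, taylorCoeff, pow_one, inv_mul_cancel₀ hc, one_mul]

lemma shiftCoeff_succ (a : ℕ → K) (b : K) {c : K} (hc : c ≠ 0) (i : ℕ) :
    shiftCoeff a b c (i + 1) = c ^ i * taylorCoeff a b (i + 1) := by
  rw [shiftCoeff, taylorCoeff, pow_succ', inv_mul_cancel_left₀ hc]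

lemma iterate_dcoeff (a : ℕ → K) (n i : ℕ) :
    dcoeff^[n] a i = n.factorial * (i + n).choose n * a (i + n) := by
  induction n generalizing i with
  | zero => simp
  | succ n ih =>
    have hchoose : (n + 1) * (i + 1 + n).choose (n + 1) = (i + 1) * (i + 1 + n).choose n := by
      have := Nat.choose_succ_right_eq (i + 1 + n) n
      rw [Nat.add_sub_cancel] at this
      linarith
    have hchoose' : ((n : K) + 1) * (i + 1 + n).choose (n + 1) = (i + 1) * (i + 1 + n).choose n :=
      mod_cast congrArg (Nat.cast (R := K)) hchoose
    rw [Function.iterate_succ_apply', dcoeff, ih, add_right_comm, ← add_assoc,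
      add_right_comm i n 1, Nat.factorial_succ]
    push_cast
    linear_combination (-(n.factorial : K) * a (i + 1 + n)) * hchoose'

lemma taylorCoeff_iterate_dcoeff (a : ℕ → K) (b : K) (n j : ℕ) :
    taylorCoeff (dcoeff^[n] a) b j
      = n.factorial * (j + n).choose n * taylorCoeff a b (j + n) := by
  rw [taylorCoeff, taylorCoeff, ← tsum_mul_left]
  refine tsum_congr fun m => ?_
  have hchoose : (m + (j + n)).choose (j + n) * (j + n).choose n
      = (m + (j + n)).choose n * (m + j).choose j := by
    have := Nat.choose_mul (n := m + (j + n)) (Nat.le_add_left n j)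
    rwa [← add_assoc, Nat.add_sub_cancel, Nat.add_sub_cancel, add_assoc] at this
  have hchoose' := congrArg (Nat.cast (R := K)) hchoose
  push_cast at hchoose'
  rw [iterate_dcoeff, add_assoc]
  linear_combination (-(n.factorial : K) * a (m + (j + n)) * b ^ m) * hchoose'

lemma pseval_iterate_dcoeff (a : ℕ → K) (b : K) (k : ℕ) :
    pseval (dcoeff^[k] a) b = k.factorial * taylorCoeff a b k := by
  rw [← taylorCoeff_zero, taylorCoeff_iterate_dcoeff, zero_add, Nat.choose_self, Nat.cast_one,
    mul_one]

lemma SPAt.norm_taylorCoeff_mul_lt {a : ℕ → K} {q r : ℕ} {ϖ : K} (hr : SPAt q a r) (hϖ : ϖ ≠ 0)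
    (hϖq : ‖ϖ‖ = (q : ℝ)⁻¹) {b : K} (hb : ‖b‖ ≤ 1) {i : ℕ} (hi : 1 ≤ i) :
    ‖taylorCoeff a b (i + 1)‖ * (q : ℝ)⁻¹ ^ (r * i) < ‖taylorCoeff a b 1‖ := by
  have hne : ϖ ^ r ≠ 0 := pow_ne_zero r hϖ
  have hsp := (hr b (ϖ ^ r) hb hne (by rw [norm_pow, hϖq])).2 (i + 1) (Nat.lt_add_of_pos_left hi)
  rwa [shiftCoeff_one a b hne, shiftCoeff_succ a b hne, norm_mul, ← pow_mul, norm_pow, hϖq,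
    mul_comm] at hsp

/-- Passing from `f^{(n)}` back to `f` divides the coefficient of degree `i + 1` by
`n! * (n + 1 + i).choose n`; the factorials on the two sides cancel. -/
lemma SPAt.norm_choose_mul_taylorCoeff_lt {a : ℕ → K} {q r n : ℕ} {ϖ : K}
    (hr : SPAt q (dcoeff^[n] a) r) (hϖ : ϖ ≠ 0) (hϖq : ‖ϖ‖ = (q : ℝ)⁻¹) {b : K} (hb : ‖b‖ ≤ 1)
    {i : ℕ} (hi : 1 ≤ i) :
    ‖((n + 1 + i).choose n : K)‖ * ‖taylorCoeff a b (n + 1 + i)‖ * (q : ℝ)⁻¹ ^ (r * i)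
      < ‖((n + 1 : ℕ) : K) * taylorCoeff a b (n + 1)‖ := by
  have hsp := hr.norm_taylorCoeff_mul_lt hϖ hϖq hb hi
  simp only [taylorCoeff_iterate_dcoeff, add_comm i 1, add_comm 1 n, add_right_comm 1 i n,
    Nat.choose_succ_self_right, mul_assoc] at hsp
  rw [norm_mul, norm_mul (n.factorial : K), mul_assoc] at hsp
  have hcancel := lt_of_mul_lt_mul_left hsp (norm_nonneg _)
  rwa [norm_mul] at hcancel

lemma IsConvergent.exists_polynomial_norm_sub_le {a : ℕ → K} (ha : IsConvergent a) {ε : ℝ}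
    (hε : 0 < ε) : ∃ P : K[X], ∀ i, ‖a i - P.coeff i‖ ≤ ε := by
  obtain ⟨N, hN⟩ := eventually_atTop.1 (ha.eventually_lt_const hε)
  refine ⟨PowerSeries.trunc N (PowerSeries.mk a), fun i => ?_⟩
  rw [PowerSeries.coeff_trunc]
  split_ifs with hi
  · simpa using hε.le
  · simpa using (hN i (not_lt.1 hi)).le

lemma IsConvergent.norm_le_gaussNorm_tail {a : ℕ → K} (ha : IsConvergent a) {i : ℕ}
    (hi : 1 ≤ i) : ‖a i‖ ≤ gaussNorm (tail a) := by
  obtain ⟨B, hB⟩ := Tendsto.bddAbove_range ha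
  have hbdd : BddAbove (Set.range fun i => ‖tail a i‖) := by
    refine ⟨B, Set.forall_mem_range.2 fun i => ?_⟩
    have hai : ‖a i‖ ≤ B := hB ⟨i, rfl⟩
    rw [tail]
    split_ifs
    · exact norm_zero.trans_le ((norm_nonneg _).trans hai)
    · exact hai
  calc ‖a i‖ = ‖tail a i‖ := by rw [tail, if_neg (Nat.one_le_iff_ne_zero.1 hi)]
    _ ≤ gaussNorm (tail a) := le_ciSup hbdd i

variable [IsUltrametricDist K]

lemma norm_taylorCoeff_le {a : ℕ → K} {b : K} (hb : ‖b‖ ≤ 1) {j : ℕ} {C : ℝ} (hC : 0 ≤ C)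
    (ha : ∀ i, j ≤ i → ‖a i‖ ≤ C) : ‖taylorCoeff a b j‖ ≤ C := by
  refine IsUltrametricDist.norm_tsum_le_of_forall_le_of_nonneg hC fun m => ?_
  rw [norm_mul, norm_pow]
  exact (mul_le_of_le_one_right (norm_nonneg _) (pow_le_one₀ (norm_nonneg b) hb)).trans
    ((norm_natCast_mul_le _ _).trans (ha _ (Nat.le_add_left j m)))

lemma norm_pseval_sub_eval_le [CompleteSpace K] {u : ℕ → K} (hu : IsConvergent u) {V : K[X]}
    {ε : ℝ} (hε : 0 ≤ ε) (huV : ∀ i, ‖u i - V.coeff i‖ ≤ ε) {x : K} (hx : ‖x‖ ≤ 1) :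
    ‖pseval u x - V.eval x‖ ≤ ε := by
  have hle : ∀ (z : K) (i : ℕ), ‖z * x ^ i‖ ≤ ‖z‖ := fun z i => by
    rw [norm_mul, norm_pow]
    exact mul_le_of_le_one_right (norm_nonneg z) (pow_le_one₀ (norm_nonneg x) hx)
  have hsum : Summable fun i => u i * x ^ i := by
    apply NonarchimedeanAddGroup.summable_of_tendsto_cofinite_zero
    rw [Nat.cofinite_eq_atTop]
    exact squeeze_zero_norm (fun i => hle (u i) i) hu
  have heval : HasSum (fun i => V.coeff i * x ^ i) (V.eval x) := by
    rw [eval_eq_sum, Polynomial.sum]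
    exact hasSum_sum_of_ne_finset_zero fun i hi => by rw [notMem_support_iff.1 hi, zero_mul]
  rw [pseval, ← heval.tsum_eq, ← hsum.tsum_sub heval.summable]
  refine IsUltrametricDist.norm_tsum_le_of_forall_le_of_nonneg hε fun i => ?_
  rw [← sub_mul]
  exact (hle _ i).trans (huV i)

lemma norm_taylorCoeff_sub_taylor_coeff_le [CompleteSpace K] {a : ℕ → K} (ha : IsConvergent a)
    {P : K[X]} {ε : ℝ} (hε : 0 ≤ ε) (haP : ∀ i, ‖a i - P.coeff i‖ ≤ ε) {b : K} (hb : ‖b‖ ≤ 1)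
    (j : ℕ) : ‖taylorCoeff a b j - (taylor b P).coeff j‖ ≤ ε := by
  rw [taylor_coeff]
  refine norm_pseval_sub_eval_le (u := fun m => ((m + j).choose j : K) * a (m + j))
    ?_ hε (fun i => ?_) hb
  · exact squeeze_zero (fun i => norm_nonneg _) (fun i => norm_natCast_mul_le _ _)
      (ha.comp (tendsto_add_atTop_nat j))
  · rw [hasseDeriv_coeff, ← mul_sub]
    exact (norm_natCast_mul_le _ _).trans (haP _)

lemma IsTaylorDominant.of_norm_sub_lt_one {ρ : ℝ} {k R : ℕ} {c c' : K → ℕ → K}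
    (hc : IsTaylorDominant ρ k R c) (hρ0 : 0 ≤ ρ) (hρ1 : ρ ≤ 1)
    (hcc' : ∀ b, ‖b‖ ≤ 1 → ∀ j, ‖c b j - c' b j‖ < 1) : IsTaylorDominant ρ k R c' := by
  have hnorm : ∀ b, ‖b‖ ≤ 1 → ‖(k : K) * c' b k‖ = ‖(k : K) * c b k‖ := fun b hb => by
    refine norm_eq_norm_of_norm_sub_lt (lt_of_lt_of_le ?_ (hc.one_le b hb))
    rw [norm_sub_rev, ← mul_sub]
    exact (norm_natCast_mul_le _ _).trans_lt (hcc' b hb k)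
  refine ⟨hc.pow_le_norm_natCast, fun b hb => hnorm b hb ▸ hc.one_le b hb, fun b hb i hi => ?_⟩
  rw [hnorm b hb]
  have hmax : ‖c' b (k + i)‖ ≤ max ‖c b (k + i)‖ ‖c b (k + i) - c' b (k + i)‖ := by
    simpa using norm_sub_le_max (c b (k + i)) (c b (k + i) - c' b (k + i))
  rcases le_max_iff.1 hmax with h | h
  · exact (mul_le_mul_of_nonneg_right h (by positivity)).trans_lt (hc.lt b hb i hi)
  · calc ‖c' b (k + i)‖ * ρ ^ (R * i) ≤ ‖c' b (k + i)‖ :=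
          mul_le_of_le_one_right (norm_nonneg _) (pow_le_one₀ hρ0 hρ1)
      _ < 1 := h.trans_lt (hcc' b hb _)
      _ ≤ ‖(k : K) * c b k‖ := hc.one_le b hb

end PowerSeries

section Criteria

variable {K : Type*} [NontriviallyNormedField K] [IsUltrametricDist K] {a : ℕ → K} {k : ℕ}

lemma one_le_norm_natCast_mul_taylorCoeff {b : K} (hder : 1 ≤ ‖pseval (dcoeff^[k] a) b‖) {j : ℕ}
    (hj : 1 ≤ j) (hjk : j ≤ k) : 1 ≤ ‖(j : K) * taylorCoeff a b k‖ := by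
  obtain ⟨n, hn⟩ := Nat.dvd_factorial hj hjk
  rw [pseval_iterate_dcoeff, hn, Nat.cast_mul, mul_comm (j : K), mul_assoc] at hder
  exact hder.trans (norm_natCast_mul_le _ _)

lemma IsConvergent.isTaylorDominant_of_gaussNorm_lt (ha : IsConvergent a) (hk : 1 ≤ k)
    (hder : ∀ b : K, ‖b‖ ≤ 1 → 1 ≤ ‖pseval (dcoeff^[k] a) b‖) {ρ : ℝ} (hρ0 : 0 ≤ ρ) (hρ1 : ρ ≤ 1)
    {R : ℕ} (hR : gaussNorm (tail a) * ρ ^ R < 1) : IsTaylorDominant ρ k R (taylorCoeff a) := by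
  have hM : 0 ≤ gaussNorm (tail a) := (norm_nonneg _).trans (ha.norm_le_gaussNorm_tail le_rfl)
  have hcoeff : ∀ b, ‖b‖ ≤ 1 → ∀ j, 1 ≤ j → ‖taylorCoeff a b j‖ ≤ gaussNorm (tail a) :=
    fun b hb j hj => norm_taylorCoeff_le hb hM fun i hi =>
      ha.norm_le_gaussNorm_tail (hj.trans hi)
  have hone_le : ∀ b : K, ‖b‖ ≤ 1 → ∀ j, 1 ≤ j → j ≤ k → 1 ≤ ‖(j : K) * taylorCoeff a b k‖ :=
    fun b hb j => one_le_norm_natCast_mul_taylorCoeff (hder b hb)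
  refine ⟨fun j hj hjk => ?_, fun b hb => hone_le b hb k hk le_rfl, fun b hb i hi => ?_⟩
  · have hzero : ‖(0 : K)‖ ≤ 1 := norm_zero.trans_le zero_le_one
    refine (lt_of_mul_lt_mul_left (hR.trans_le ?_) hM).le
    calc 1 ≤ ‖(j : K)‖ * ‖taylorCoeff a 0 k‖ := norm_mul (j : K) _ ▸ hone_le 0 hzero j hj hjk
      _ ≤ ‖(j : K)‖ * gaussNorm (tail a) := by gcongr; exact hcoeff 0 hzero k hk
      _ = gaussNorm (tail a) * ‖(j : K)‖ := mul_comm _ _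
  · calc ‖taylorCoeff a b (k + i)‖ * ρ ^ (R * i) ≤ gaussNorm (tail a) * ρ ^ R := by
          gcongr ?_ * ?_
          · exact hcoeff b hb _ (hk.trans (Nat.le_add_right k i))
          · exact pow_le_pow_of_le_one hρ0 hρ1 (Nat.le_mul_of_pos_right R hi)
      _ < 1 := hR
      _ ≤ ‖(k : K) * taylorCoeff a b k‖ := hone_le b hb k hk le_rfl

lemma norm_natCast_eq_one_of_coprime {p u : ℕ} (hp : ‖(p : K)‖ < 1) (hpu : p.Coprime u) :
    ‖(u : K)‖ = 1 := by
  have hbezout : (1 : K) = p.gcdA u * p + p.gcdB u * u := by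
    have := Nat.gcd_eq_gcd_ab p u
    rw [hpu.gcd_eq_one] at this
    rw [mul_comm _ (p : K), mul_comm _ (u : K)]
    exact_mod_cast congrArg (Int.cast (R := K)) this
  have hle : ∀ (z : ℤ) (x : K), ‖z * x‖ ≤ ‖x‖ := fun z x => by
    rw [norm_mul]
    exact mul_le_of_le_one_left (norm_nonneg x) (IsUltrametricDist.norm_intCast_le_one K z)
  refine le_antisymm (IsUltrametricDist.norm_natCast_le_one K u) ?_
  by_contra! hu
  have := IsUltrametricDist.norm_add_le_max ((p.gcdA u : K) * p) (p.gcdB u * u)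
  rw [← hbezout, norm_one] at this
  exact this.not_gt (max_lt ((hle _ _).trans_lt hp) ((hle _ _).trans_lt hu))

lemma norm_prime_pow_le_norm_natCast {p : ℕ} (hp : p.Prime) (hp1 : ‖(p : K)‖ < 1) {N L : ℕ}
    (hN : N ≠ 0) (hNL : N ≤ 2 ^ L) : ‖(p : K)‖ ^ L ≤ ‖(N : K)‖ := by
  obtain ⟨v, u, hu, rfl⟩ := Nat.exists_eq_pow_mul_and_not_dvd hN p hp.ne_one
  have hvL : v ≤ L := by
    refine (Nat.pow_le_pow_iff_right one_lt_two).1 (le_trans ?_ hNL)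
    exact (Nat.pow_le_pow_left hp.two_le v).trans
      (Nat.le_mul_of_pos_right _ (Nat.pos_of_ne_zero (right_ne_zero_of_mul hN)))
  rw [Nat.cast_mul, Nat.cast_pow, norm_mul, norm_pow,
    norm_natCast_eq_one_of_coprime hp1 (hp.coprime_iff_not_dvd.2 hu), mul_one]
  exact pow_le_pow_of_le_one (norm_nonneg _) hp1.le hvL

end Criteria

section LocalField

variable {K : Type*} [NontriviallyNormedField K] {q : ℕ}

lemma IsLocalField.isUltrametricDist (hK : IsLocalField K q) : IsUltrametricDist K :=
  IsUltrametricDist.isUltrametricDist_of_isNonarchimedean_norm hK.nonarch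

lemma IsLocalField.inv_le_one (hK : IsLocalField K q) : (q : ℝ)⁻¹ ≤ 1 :=
  inv_le_one_of_one_le₀ (mod_cast hK.one_lt.le)

lemma IsLocalField.exists_isDigitSystem (hK : IsLocalField K q) :
    ∃ (ϖ : K) (T : Finset K), IsDigitSystem ϖ T ∧ T.card = q ∧ ‖ϖ‖ = (q : ℝ)⁻¹ := by
  obtain ⟨ϖ, hϖ⟩ := hK.exists_unif
  obtain ⟨T, hcard, hle, hexists⟩ := hK.residue
  have hq : (1 : ℝ) < q := mod_cast hK.one_lt
  refine ⟨ϖ, T, ⟨?_, hϖ ▸ inv_lt_one_of_one_lt₀ hq, fun x hx => ?_, hle, hexists⟩, hcard, hϖ⟩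
  · rw [← norm_pos_iff, hϖ]
    positivity
  · obtain ⟨m, hm⟩ := hK.discrete x hx
    exact ⟨-m, by rw [hm, hϖ, inv_zpow', neg_neg]⟩

lemma IsLocalField.isTaylorDominant_of_SPAt {p e r k : ℕ} {a : ℕ → K} (hK : IsLocalField K q)
    (hres : IsResidueData K q p e) (hk : 1 ≤ k)
    (hder : ∀ b : K, ‖b‖ ≤ 1 → 1 ≤ ‖pseval (dcoeff^[k] a) b‖)
    (hr : SPAt q (dcoeff^[k - 1] a) r) :
    IsTaylorDominant (q : ℝ)⁻¹ k (r + e * (k + 1)) (taylorCoeff a) := by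
  have := hK.isUltrametricDist
  obtain ⟨ϖ, T, h, -, hϖ⟩ := hK.exists_isDigitSystem
  obtain ⟨hp, -, he, hpe⟩ := hres
  have hρ : 0 ≤ (q : ℝ)⁻¹ := by positivity
  have hρ1 : (q : ℝ)⁻¹ < 1 := hϖ ▸ h.norm_lt_one
  have hnat : ∀ {N L : ℕ}, N ≠ 0 → N ≤ 2 ^ L → (q : ℝ)⁻¹ ^ (e * L) ≤ ‖(N : K)‖ := fun hN hNL => by
    rw [pow_mul, ← hpe]
    exact norm_prime_pow_le_norm_natCast hp (hpe ▸ pow_lt_one₀ hρ hρ1 he.ne') hN hNL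
  refine ⟨fun j hj hjk => ?_, fun b hb =>
    one_le_norm_natCast_mul_taylorCoeff (hder b hb) hk le_rfl, fun b hb i hi => ?_⟩
  · refine le_trans ?_ (hnat (Nat.one_le_iff_ne_zero.1 hj) (hjk.trans Nat.lt_two_pow_self.le))
    exact pow_le_pow_of_le_one hρ hρ1.le (by nlinarith)
  obtain ⟨n, rfl⟩ := Nat.exists_eq_add_of_le' hk
  set X := ‖taylorCoeff a b (n + 1 + i)‖
  have hchoose : (q : ℝ)⁻¹ ^ (e * (n + 1 + i)) ≤ ‖((n + 1 + i).choose n : K)‖ :=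
    hnat (Nat.choose_pos (by omega)).ne' (Nat.choose_le_two_pow _ _)
  have hexp : e * (n + 1 + i) + r * i ≤ (r + e * (n + 1 + 1)) * i := by
    have := Nat.mul_le_mul_left e (show n + 1 + i ≤ (n + 1 + 1) * i by nlinarith)
    linarith
  calc X * (q : ℝ)⁻¹ ^ ((r + e * (n + 1 + 1)) * i)
      ≤ X * (q : ℝ)⁻¹ ^ (e * (n + 1 + i) + r * i) := by
        gcongr 1
        exact pow_le_pow_of_le_one hρ hρ1.le hexp
    _ = (q : ℝ)⁻¹ ^ (e * (n + 1 + i)) * X * (q : ℝ)⁻¹ ^ (r * i) := by rw [pow_add]; ring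
    _ ≤ ‖((n + 1 + i).choose n : K)‖ * X * (q : ℝ)⁻¹ ^ (r * i) := by gcongr
    _ < ‖((n + 1 : ℕ) : K) * taylorCoeff a b (n + 1)‖ :=
        hr.norm_choose_mul_taylorCoeff_lt h.ne_zero hϖ hb hi

lemma IsLocalField.norm_setIntegral_char_pseval_le (hK : IsLocalField K q) [MeasurableSpace K]
    {μ : Measure K} [μ.IsAddLeftInvariant] (hμ : μ {x | ‖x‖ ≤ 1} = 1) {ψ : K → ℂ}
    (hψ : IsAddChar ψ) {a : ℕ → K} (ha : IsConvergent a) {k R : ℕ} (hk : 1 ≤ k)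
    (hdom : IsTaylorDominant (q : ℝ)⁻¹ k R (taylorCoeff a)) {y : K} (hy : y ≠ 0) :
    ‖∫ x in {x | ‖x‖ ≤ 1}, ψ (y * pseval a x) ∂μ‖
      ≤ k * (q : ℝ) ^ (2 * R + 1) * ‖y‖ ^ (-(1 : ℝ) / k) := by
  have := hK.isUltrametricDist
  have := hK.complete
  obtain ⟨ϖ, T, h, rfl, hϖ⟩ := hK.exists_isDigitSystem
  have hpos : 0 < ‖y‖ + 2 := by positivity
  obtain ⟨P, hP⟩ := ha.exists_polynomial_norm_sub_le (inv_pos.2 hpos)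
  have hε : (‖y‖ + 2)⁻¹ < 1 := inv_lt_one_of_one_lt₀ (by linarith [norm_nonneg y])
  have hdomP : IsTaylorDominant ‖ϖ‖ k R fun b => (taylor b P).coeff :=
    hϖ ▸ hdom.of_norm_sub_lt_one (by positivity) hK.inv_le_one fun b hb j =>
      (norm_taylorCoeff_sub_taylor_coeff_le ha (inv_nonneg.2 hpos.le) hP hb j).trans_lt hε
  refine norm_setIntegral_char_le_of_eventually h hμ hψ (fun x hx => ?_)
    (hdomP.eventually_norm_digitAverage_le h hψ hk hϖ hy)
  calc ‖y * pseval a x - y * P.eval x‖ = ‖y‖ * ‖pseval a x - P.eval x‖ := by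
        rw [← mul_sub, norm_mul]
    _ ≤ ‖y‖ * (‖y‖ + 2)⁻¹ := by
        gcongr
        exact norm_pseval_sub_eval_le ha (inv_nonneg.2 hpos.le) hP hx
    _ < 1 := by
        rw [mul_inv_lt_iff₀ hpos]
        linarith

end LocalField

end VdC

open VdC in
/-- Proposition 3.2: the analytic non-archimedean van der Corput
Lemma.  Suppose `f ∈ K⦃x⦄` satisfies `|f^{(k)}(x)| ≥ 1` on `O_K` for some `k ≥ 1`.
Then `|∫_{O_K} ψ(y f(t)) dt| ≤ c_k |y|^{-1/k}` for all `y ∈ K^×`, where `c_k` depends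
only on `k`, `q_K` and the Gauss norm `‖f - f(0)‖`; alternatively, if `K` has
characteristic zero, `c_k` can be taken to depend only on `k`, `q_K`, the ramification
degree `ord(p_K)` and the SP-number of `f^{(k-1)}`. -/
theorem statement7 (k q : ℕ) (hk : 1 ≤ k) (hq : 1 < q) :
    (∃ c : ℝ → ℝ,
      ∀ (K : Type) [NontriviallyNormedField K] [MeasurableSpace K]
        (μ : Measure K), μ.IsAddHaarMeasure → μ {x : K | ‖x‖ ≤ 1} = 1 →
        IsLocalField K q → ∀ ψ : K → ℂ, IsAddChar ψ →
        ∀ a : ℕ → K, IsConvergent a →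
          (∀ x : K, ‖x‖ ≤ 1 → 1 ≤ ‖pseval (dcoeff^[k] a) x‖) →
          ∀ y : K, y ≠ 0 →
            ‖∫ x in {x : K | ‖x‖ ≤ 1}, ψ (y * pseval a x) ∂μ‖
              ≤ c (gaussNorm (tail a)) * ‖y‖ ^ (-(1 : ℝ) / k)) ∧
    (∃ c : ℕ → ℕ → ℝ,
      ∀ (K : Type) [NontriviallyNormedField K] [CharZero K] [MeasurableSpace K]
        (μ : Measure K), μ.IsAddHaarMeasure → μ {x : K | ‖x‖ ≤ 1} = 1 →
        IsLocalField K q → ∀ p e : ℕ, IsResidueData K q p e →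
        ∀ ψ : K → ℂ, IsAddChar ψ →
        ∀ a : ℕ → K, IsConvergent a →
          (∀ x : K, ‖x‖ ≤ 1 → 1 ≤ ‖pseval (dcoeff^[k] a) x‖) →
          ∀ r : ℕ, IsLeast {r' : ℕ | SPAt q (dcoeff^[k - 1] a) r'} r →
          ∀ y : K, y ≠ 0 →
            ‖∫ x in {x : K | ‖x‖ ≤ 1}, ψ (y * pseval a x) ∂μ‖
              ≤ c e r * ‖y‖ ^ (-(1 : ℝ) / k)) := by
  refine ⟨?_, fun e r => k * (q : ℝ) ^ (2 * (r + e * (k + 1)) + 1), ?_⟩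
  · have hR (M : ℝ) : ∃ R : ℕ, M * (q : ℝ)⁻¹ ^ R < 1 := by
      obtain ⟨R, hR⟩ := pow_unbounded_of_one_lt M (Nat.one_lt_cast.2 hq : (1 : ℝ) < q)
      exact ⟨R, by rwa [inv_pow, ← div_eq_mul_inv, div_lt_one (by positivity)]⟩
    choose R hR using hR
    refine ⟨fun M => k * (q : ℝ) ^ (2 * R M + 1), ?_⟩
    intro K _ _ μ _ hμ hK ψ hψ a ha hder y hy
    have := hK.isUltrametricDist
    exact hK.norm_setIntegral_char_pseval_le hμ hψ ha hk
      (ha.isTaylorDominant_of_gaussNorm_lt hk hder (by positivity) hK.inv_le_one (hR _)) hy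
  · intro K _ _ _ μ _ hμ hK p e hres ψ hψ a ha hder r hr y hy
    exact hK.norm_setIntegral_char_pseval_le hμ hψ ha hk
      (hK.isTaylorDominant_of_SPAt hres hk hder hr.1) hy
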